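/- arXiv:2010.15730 — 2 statements merged into one kernel-verified Lean document; each statement's English description precedes it below -/
import Mathlib

section
/- Let x, x' ∈ X be distinct, let a ∈ A maximize x(e) − x'(e) over e ∈ A, and let b ∈ A maximize x'(e) − x(e) over e ∈ A (differences in ℤ). Define x'' : A → ℕ by x''(a) = x'(a) + 1, x''(b) = x'(b) − 1, and x''(e) = x'(e) for e ∈ A \ {a,b}. Then x'' ∈ X and D(x,x'') ⊆ D(x,x'). -/
/-!
Adding the column strategy `y` to all rows changes neither their differences nor which card moves,
so it suffices to compare total counts `p = x + y`, `q = x' + y` and `q' = x'' + y`, and to show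
that if `p` and `q` have a common winner then so do `p` and `q'`.

As `a` maximizes `p - q` and `b` minimizes it, a winner of `q` which is `a` also wins `p`, and once
`b` is a common winner every winner of `q` wins `p`. So `a` remains a common winner if it wins `q`;
otherwise any common winner other than `b` survives the move. If `b` is the only winner of `q`, it
can afford to lose a card, because `q a < p a ≤ p b < q b` leaves a gap of at least two to `a`.
-/

/-- The set of candidates receiving the maximum number of cards under `z`. -/
def AM {A : Type*} [Fintype A] (z : A → ℕ) : Set A := {a | ∀ b, z b ≤ z a}

theorem exists_lt_of_sum_eq_of_ne {ι M : Type*} [Fintype ι] [AddCommMonoid M] [LinearOrder M]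
    [IsOrderedCancelAddMonoid M] {f g : ι → M} (hsum : ∑ i, f i = ∑ i, g i) (hne : f ≠ g) :
    ∃ i, f i < g i := by
  by_contra! hle
  exact (Fintype.sum_strictMono (lt_of_le_of_ne hle hne.symm)).ne hsum.symm

section Winners

variable {A : Type*} [Fintype A] {p q : A → ℕ} {c d : A}

theorem mem_AM : c ∈ AM q ↔ ∀ e, q e ≤ q c := Iff.rfl

theorem mem_AM_of_le (hc : c ∈ AM q) (hcd : q c ≤ q d) : d ∈ AM q :=
  fun e => (mem_AM.1 hc e).trans hcd

theorem mem_AM_of_sub_le_sub (hc : c ∈ AM p) (hd : d ∈ AM q)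
    (hcd : (p c : ℤ) - q c ≤ (p d : ℤ) - q d) : d ∈ AM p := by
  have hq : q c ≤ q d := mem_AM.1 hd c
  exact mem_AM_of_le hc (by omega)

end Winners

/-- `MovesCard b a q q'` says that the distribution `q'` of cards arises from `q` by moving one card
from candidate `b` to candidate `a`. Adding the moved card on both sides avoids the truncated
subtraction `q b - 1`, so that `b` must hold a card of `q` unless `b = a`. -/
def MovesCard {A : Type*} [DecidableEq A] (b a : A) (q q' : A → ℕ) : Prop :=
  q' + Pi.single b 1 = q + Pi.single a 1

namespace MovesCard

variable {A : Type*} [DecidableEq A] {p q q' : A → ℕ} {a b c e : A}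

theorem of_pos (hab : a ≠ b) (hb : 0 < q b) :
    MovesCard b a q fun e => if e = a then q a + 1 else if e = b then q b - 1 else q e := by
  funext e
  rcases eq_or_ne e a with rfl | hea
  · simp [hab]
  · rcases eq_or_ne e b with rfl | heb
    · simp [hea, Nat.sub_add_cancel hb]
    · simp [hea, heb]

theorem add_right (h : MovesCard b a q q') (y : A → ℕ) : MovesCard b a (q + y) (q' + y) := by
  unfold MovesCard at h ⊢
  rw [add_right_comm, h, add_right_comm]

theorem apply_add (h : MovesCard b a q q') (e : A) :
    q' e + Pi.single (M := fun _ => ℕ) b 1 e = q e + Pi.single (M := fun _ => ℕ) a 1 e :=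
  congrFun h e

theorem apply_le (h : MovesCard b a q q') (hea : e ≠ a) : q' e ≤ q e := by
  have := h.apply_add e
  rw [Pi.single_eq_of_ne hea] at this
  omega

theorem le_apply (h : MovesCard b a q q') (heb : e ≠ b) : q e ≤ q' e := by
  have := h.apply_add e
  rw [Pi.single_eq_of_ne heb] at this
  omega

theorem target_apply_le_add_one (h : MovesCard b a q q') : q' a ≤ q a + 1 := by
  have := h.apply_add a
  rw [Pi.single_eq_same] at this
  omega

theorem source_le_apply_add_one (h : MovesCard b a q q') : q b ≤ q' b + 1 := by
  have := h.apply_add b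
  rw [Pi.single_eq_same] at this
  omega

variable [Fintype A]

theorem sum_eq (h : MovesCard b a q q') : ∑ e, q' e = ∑ e, q e := by
  simpa [Finset.sum_add_distrib] using Finset.sum_congr rfl fun e (_ : e ∈ Finset.univ) =>
    h.apply_add e

theorem target_mem_AM (h : MovesCard b a q q') (hab : a ≠ b) (ha : a ∈ AM q) : a ∈ AM q' := by
  intro e
  rcases eq_or_ne e a with rfl | hea
  · exact le_rfl
  · calc q' e ≤ q e := h.apply_le hea
      _ ≤ q a := mem_AM.1 ha e
      _ ≤ q' a := h.le_apply hab

theorem mem_AM_of_target_lt (h : MovesCard b a q q') (hc : c ∈ AM q) (hcb : c ≠ b)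
    (hac : q a < q c) : c ∈ AM q' := by
  intro e
  refine le_trans ?_ (h.le_apply hcb)
  rcases eq_or_ne e a with rfl | hea
  · exact h.target_apply_le_add_one.trans hac
  · exact (h.apply_le hea).trans (mem_AM.1 hc e)

theorem source_mem_AM (h : MovesCard b a q q') (hb : ∀ e, e ≠ b → q e < q b)
    (hab : q a + 2 ≤ q b) : b ∈ AM q' := by
  intro e
  have hb' := h.source_le_apply_add_one
  rcases eq_or_ne e b with rfl | heb
  · exact le_rfl
  rcases eq_or_ne e a with rfl | hea
  · have := h.target_apply_le_add_one
    omega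
  · have := h.apply_le hea
    have := hb e heb
    omega

theorem source_mem_AM_or_exists_mem_AM (h : MovesCard b a q q')
    (hb : ∀ e, (q e : ℤ) - p e ≤ (q b : ℤ) - p b) (hqa : q a < p a) (hpb : p b < q b)
    (hbp : b ∈ AM p) (hbq : b ∈ AM q) : b ∈ AM q' ∨ ∃ e ≠ b, e ∈ AM p ∩ AM q := by
  refine or_iff_not_imp_right.2 fun hunique => h.source_mem_AM (fun e heb => ?_) ?_
  · by_contra! hbe
    have heq : e ∈ AM q := mem_AM_of_le hbq hbe
    have := hb e
    exact hunique ⟨e, heb, mem_AM_of_sub_le_sub hbp heq (by omega), heq⟩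
  · have : p a ≤ p b := mem_AM.1 hbp a
    omega

theorem AM_inter_nonempty (h : MovesCard b a q q')
    (ha : ∀ e, (p e : ℤ) - q e ≤ (p a : ℤ) - q a) (hb : ∀ e, (q e : ℤ) - p e ≤ (q b : ℤ) - p b)
    (hqa : q a < p a) (hpb : p b < q b) (hpq : (AM p ∩ AM q).Nonempty) :
    (AM p ∩ AM q').Nonempty := by
  obtain ⟨c, hcp, hcq⟩ := hpq
  by_cases haq : a ∈ AM q
  · have hab : a ≠ b := by
      rintro rfl
      exact hqa.asymm hpb
    exact ⟨a, mem_AM_of_sub_le_sub hcp haq (ha c), h.target_mem_AM hab haq⟩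
  have lt_of_mem {e : A} (he : e ∈ AM q) : q a < q e :=
    lt_of_not_ge fun hea => haq (mem_AM_of_le he hea)
  rcases eq_or_ne c b with rfl | hcb
  · rcases h.source_mem_AM_or_exists_mem_AM hb hqa hpb hcp hcq with hcq' | ⟨e, hec, hep, heq⟩
    · exact ⟨c, hcp, hcq'⟩
    · exact ⟨e, hep, h.mem_AM_of_target_lt heq hec (lt_of_mem heq)⟩
  · exact ⟨c, hcp, h.mem_AM_of_target_lt hcq hcb (lt_of_mem hcq)⟩

end MovesCard

/-- Moving `x'` one step closer to `x` (from `x'` to `x''`) can only shrink the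
set `D` of column strategies that surely differentiate the two rows. -/
theorem D_shrinks_for_neighbor
    {A : Type*} [Fintype A] [DecidableEq A] (α β : ℕ) (hα : 1 ≤ α) (hβ : 1 ≤ β)
    (x x' : A → ℕ) (hx : (∑ e, x e) = α) (hx' : (∑ e, x' e) = α) (hne : x ≠ x')
    (a b : A)
    (ha : ∀ e, (x e : ℤ) - x' e ≤ (x a : ℤ) - x' a)
    (hb : ∀ e, (x' e : ℤ) - x e ≤ (x' b : ℤ) - x b)
    (x'' : A → ℕ)
    (hx'' : x'' = fun e => if e = a then x' a + 1 else if e = b then x' b - 1 else x' e) :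
    (∑ e, x'' e) = α ∧
    {y : A → ℕ | (∑ e, y e) = β ∧ AM (x + y) ∩ AM (x'' + y) = ∅} ⊆
      {y : A → ℕ | (∑ e, y e) = β ∧ AM (x + y) ∩ AM (x' + y) = ∅} := by
  obtain ⟨i, hi⟩ := exists_lt_of_sum_eq_of_ne (hx'.trans hx.symm) hne.symm
  obtain ⟨j, hj⟩ := exists_lt_of_sum_eq_of_ne (hx.trans hx'.symm) hne
  have hxa : x' a < x a := by have := ha i; omega
  have hxb : x b < x' b := by have := hb j; omega
  have hab : a ≠ b := by
    rintro rfl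
    exact hxa.asymm hxb
  have hmove : MovesCard b a x' x'' := hx'' ▸ MovesCard.of_pos hab (Nat.zero_lt_of_lt hxb)
  refine ⟨hmove.sum_eq.trans hx', fun y ⟨hy, hD⟩ => ⟨hy, ?_⟩⟩
  rw [← Set.not_nonempty_iff_eq_empty] at hD ⊢
  exact fun hpq => hD <| (hmove.add_right y).AM_inter_nonempty (by simpa using ha)
    (by simpa using hb) (by simpa using hxa) (by simpa using hxb) hpq
end

section
/- Suppose p ≥ 4. Then every DAV form has pairwise distinct rows if and only if (α,β) ≠ (1,1) and β ≥ 2α − 2. That is, the following are equivalent: (i) (α,β) ≠ (1,1) and β ≥ 2α − 2; (ii) every function g : X × Y → A with g(x,y) ∈ AM(x+y) for all (x,y) ∈ X × Y satisfies: for all distinct x, x' ∈ X there exists y ∈ Y with g(x,y) ≠ g(x',y). -/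
/-!
Two rows `x`, `x'` can be given equal values by some DAV form exactly when no column `y` makes
`AM (x + y)` and `AM (x' + y)` disjoint, so the theorem is about the existence of such columns.

If `x ≠ x'`, some `b` gets more cards in `x` and some `c` gets more in `x'`. Up to exchanging the
rows, `c` beats `b` in `x'`. The column voter gives `b` just enough cards to overtake `c` in `x`,
splits the remaining cards equally between `b` and `c`, and discards a possible odd card on a third
candidate with few cards in `x`. When `β ≥ 2α - 2`, candidate `b` is then the only winner against
`x`, while `c` still beats `b` against `x'`.

Conversely, take the rows giving `α - 1` cards to `a` and the last card to `b`, respectively `c`.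
They have no common winner only if `b` and `c` both win before this last card is played, which
costs the column voter at least `2 (α - 1)` cards and is impossible with a single column card.
-/

section

variable {A : Type*} [Fintype A]

/-- A distributed approval voting form with `α` row cards and `β` column cards. As in the theorem,
strategies are arbitrary functions `A → ℕ`, and the values of `g` outside `X × Y` are irrelevant. -/
def IsDAVForm (α β : ℕ) (g : (A → ℕ) → (A → ℕ) → A) : Prop :=
  ∀ x y : A → ℕ, ∑ a, x a = α → ∑ a, y a = β → g x y ∈ AM (x + y)

/-- Distinct row strategies with `α` cards are told apart by `g` at some column strategy with `β`
cards. -/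
def HasDistinctRows (α β : ℕ) (g : (A → ℕ) → (A → ℕ) → A) : Prop :=
  ∀ x x' : A → ℕ, ∑ a, x a = α → ∑ a, x' a = α → x ≠ x' → ∃ y, ∑ a, y a = β ∧ g x y ≠ g x' y

theorem AM_nonempty [Nonempty A] (z : A → ℕ) : (AM z).Nonempty :=
  Finite.exists_max z

theorem lt_of_mem_AM_of_notMem_AM {z : A → ℕ} {a b : A} (ha : a ∈ AM z) (hb : b ∉ AM z) :
    z b < z a := by
  by_contra! hab
  exact hb fun i => (ha i).trans hab

theorem disjoint_AM_of_forall_lt {z z' : A → ℕ} {b c : A}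
    (h : ∀ e, z e < z b ∨ z' e < z' c) : Disjoint (AM z) (AM z') :=
  Set.disjoint_left.2 fun e he he' => (h e).elim (he b).not_gt (he' c).not_gt

theorem mem_AM_add_single_self [DecidableEq A] {z : A → ℕ} {a : A} (ha : a ∈ AM z) (n : ℕ) :
    a ∈ AM (z + Pi.single a n) := by
  intro i
  have := ha i
  obtain rfl | hia := eq_or_ne i a
  · exact le_rfl
  · simp only [Pi.add_apply, Pi.single_eq_same, Pi.single_eq_of_ne hia]
    omega

theorem mem_AM_add_single_one_of_notMem [DecidableEq A] {z : A → ℕ} {a b : A} (ha : a ∈ AM z)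
    (hb : b ∉ AM z) : a ∈ AM (z + Pi.single b 1) := by
  intro i
  have hba := lt_of_mem_AM_of_notMem_AM ha hb
  have hab : a ≠ b := by rintro rfl; exact hb ha
  obtain rfl | hib := eq_or_ne i b
  · simpa [hab] using hba
  · simpa [hab, hib] using ha i

theorem mem_AM_and_mem_AM_of_disjoint [DecidableEq A] {z : A → ℕ} {b c : A}
    (h : Disjoint (AM (z + Pi.single b 1)) (AM (z + Pi.single c 1))) : b ∈ AM z ∧ c ∈ AM z := by
  rw [Set.disjoint_left] at h
  by_cases hb : b ∈ AM z <;> by_cases hc : c ∈ AM z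
  · exact ⟨hb, hc⟩
  · exact (h (mem_AM_add_single_self hb 1) (mem_AM_add_single_one_of_notMem hb hc)).elim
  · exact (h (mem_AM_add_single_one_of_notMem hc hb) (mem_AM_add_single_self hc 1)).elim
  · have : Nonempty A := ⟨b⟩
    obtain ⟨i, hi⟩ := AM_nonempty z
    exact (h (mem_AM_add_single_one_of_notMem hi hb) (mem_AM_add_single_one_of_notMem hi hc)).elim

theorem sum_ne_one_of_mem_AM_of_mem_AM {z : A → ℕ} {b c : A} (hbc : b ≠ c) (hb : b ∈ AM z)
    (hc : c ∈ AM z) : ∑ i, z i ≠ 1 := by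
  intro hsum
  have hle : z b + z c ≤ 1 :=
    hsum ▸ Finset.add_le_sum (fun _ _ => Nat.zero_le _) (Finset.mem_univ b) (Finset.mem_univ c) hbc
  have hzero (i : A) : z i = 0 := by
    have := hb i
    have := hc b
    omega
  simp [hzero] at hsum

theorem two_mul_le_sum_and_sum_ne_one_of_disjoint_AM [DecidableEq A] {n : ℕ} {a b c : A}
    (hab : a ≠ b) (hac : a ≠ c) (hbc : b ≠ c) {y : A → ℕ}
    (h : Disjoint (AM ((Pi.single a n + Pi.single b 1 : A → ℕ) + y))
      (AM ((Pi.single a n + Pi.single c 1 : A → ℕ) + y))) :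
    2 * n ≤ ∑ i, y i ∧ ∑ i, y i ≠ 1 := by
  rw [add_right_comm, add_right_comm _ _ y] at h
  obtain ⟨hb, hc⟩ := mem_AM_and_mem_AM_of_disjoint h
  have le_of_mem_AM {d : A} (hd : d ∈ AM (Pi.single a n + y)) (had : a ≠ d) (i : A) :
      Pi.single (M := fun _ => ℕ) a n i + y i ≤ y d := by
    simpa [had.symm] using hd i
  have le_sum : y b + y c ≤ ∑ i, y i :=
    Finset.add_le_sum (fun _ _ => Nat.zero_le _) (Finset.mem_univ b) (Finset.mem_univ c) hbc
  constructor
  · have hnb := le_of_mem_AM hb hab a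
    have hnc := le_of_mem_AM hc hac a
    rw [Pi.single_eq_same] at hnb hnc
    omega
  · exact sum_ne_one_of_mem_AM_of_mem_AM hbc
      (fun i => le_of_add_le_right (le_of_mem_AM hb hab i))
      (fun i => le_of_add_le_right (le_of_mem_AM hc hac i))

theorem exists_lt_of_sum_eq_of_ne_s7 {M : Type*} [AddCommMonoid M] [LinearOrder M]
    [IsOrderedCancelAddMonoid M] {x x' : A → M} (h : ∑ a, x a = ∑ a, x' a) (hne : x ≠ x') :
    ∃ b, x' b < x b := by
  by_contra! hle
  exact (Fintype.sum_strictMono (lt_of_le_of_ne hle hne)).ne h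

theorem exists_ne_ne_add_two_mul_le_sum (hp : 4 ≤ Fintype.card A) (x : A → ℕ) {b c : A}
    (hbc : b ≠ c) : ∃ d, d ≠ b ∧ d ≠ c ∧ x b + 2 * x d ≤ ∑ a, x a := by
  classical
  have hcard : 1 < (({b, c} : Finset A)ᶜ).card := by
    rw [Finset.card_compl, Finset.card_pair hbc]
    omega
  obtain ⟨d, hd, f, hf, hdf⟩ := Finset.one_lt_card.1 hcard
  wlog hle : x d ≤ x f generalizing d f
  · exact this f hf d hd hdf.symm (le_of_not_ge hle)
  simp only [Finset.mem_compl, Finset.mem_insert, Finset.mem_singleton, not_or] at hd hf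
  refine ⟨d, hd.1, hd.2, ?_⟩
  calc x b + 2 * x d ≤ x b + (x d + x f) := by omega
    _ = ∑ a ∈ {b, d, f}, x a := by
      rw [Finset.sum_insert (by simp [Ne.symm hd.1, Ne.symm hf.1]), Finset.sum_pair hdf]
    _ ≤ ∑ a, x a := Finset.sum_le_sum_of_subset (Finset.subset_univ _)

theorem exists_sum_eq_add_add {M : Type*} [AddCommMonoid M] {b c d : A} (hbc : b ≠ c)
    (hbd : b ≠ d) (hcd : c ≠ d) (k l m : M) :
    ∃ y : A → M, ∑ a, y a = k + l + m ∧ y b = k ∧ y c = l ∧ y d = m ∧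
      ∀ e, e ≠ b → e ≠ c → e ≠ d → y e = 0 := by
  classical
  refine ⟨Pi.single b k + Pi.single c l + Pi.single d m, ?_, ?_, ?_, ?_, fun e hb hc hd => ?_⟩
  · simp [Finset.sum_add_distrib]
  · simp [hbc, hbd]
  · simp [hbc.symm, hcd]
  · simp [hbd.symm, hcd.symm]
  · simp [hb, hc, hd]

theorem exists_disjoint_AM_of_lt {α β : ℕ} (hne : ¬(α = 1 ∧ β = 1)) (hβ : 2 * α - 2 ≤ β)
    {x x' : A → ℕ} (hx : ∑ a, x a = α) {b c d : A} (hb : x' b < x b) (hc : x c < x' c)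
    (hbc' : x' b < x' c) (hdb : d ≠ b) (hdc : d ≠ c) (hd : x b + 2 * x d ≤ α) :
    ∃ y : A → ℕ, ∑ a, y a = β ∧ Disjoint (AM (x + y)) (AM (x' + y)) := by
  have hbc : b ≠ c := by rintro rfl; omega
  have add_le {e : A} (he : e ≠ b) : x b + x e ≤ α :=
    hx ▸ Finset.add_le_sum (fun _ _ => Nat.zero_le _) (Finset.mem_univ b) (Finset.mem_univ e)
      he.symm
  have hbc_le := add_le hbc.symm
  -- The truncated difference is `0` when `b` already beats `c` in `x`.
  obtain ⟨δ, hδ⟩ : ∃ δ, δ = x c + 1 - x b := ⟨_, rfl⟩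
  obtain ⟨k, m, hm, hkm⟩ : ∃ k m, m < 2 ∧ δ + 2 * k + m = β :=
    ⟨(β - δ) / 2, (β - δ) % 2, Nat.mod_lt _ two_pos, by omega⟩
  obtain ⟨y, hy, hyb, hyc, hyd, hye⟩ :=
    exists_sum_eq_add_add hbc hdb.symm hdc.symm (k + δ) k m
  refine ⟨y, by omega, disjoint_AM_of_forall_lt (b := b) (c := c) fun e => ?_⟩
  simp only [Pi.add_apply]
  obtain rfl | heb := eq_or_ne e b
  · right
    omega
  left
  have hbe_le := add_le heb
  obtain rfl | hec := eq_or_ne e c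
  · omega
  obtain rfl | hed := eq_or_ne e d
  · omega
  · have := hye e heb hec hed
    omega

theorem exists_disjoint_AM_of_ne (hp : 4 ≤ Fintype.card A) {α β : ℕ} (hne : ¬(α = 1 ∧ β = 1))
    (hβ : 2 * α - 2 ≤ β) {x x' : A → ℕ} (hx : ∑ a, x a = α) (hx' : ∑ a, x' a = α)
    (hxx' : x ≠ x') : ∃ y : A → ℕ, ∑ a, y a = β ∧ Disjoint (AM (x + y)) (AM (x' + y)) := by
  obtain ⟨b, hb⟩ := exists_lt_of_sum_eq_of_ne_s7 (hx.trans hx'.symm) hxx'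
  obtain ⟨c, hc⟩ := exists_lt_of_sum_eq_of_ne_s7 (hx'.trans hx.symm) hxx'.symm
  -- Otherwise `x c < x' c ≤ x' b < x b`, and the rows can be exchanged.
  wlog hbc' : x' b < x' c generalizing x x' b c
  · obtain ⟨y, hy, hdisj⟩ := this hx' hx hxx'.symm c hc b hb (by omega)
    exact ⟨y, hy, hdisj.symm⟩
  have hbc : b ≠ c := by rintro rfl; exact hbc'.false
  obtain ⟨d, hdb, hdc, hd⟩ := exists_ne_ne_add_two_mul_le_sum hp x hbc
  exact exists_disjoint_AM_of_lt hne hβ hx hb hc hbc' hdb hdc (hd.trans_eq hx)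

theorem exists_isDAVForm_forall_eq_of_not_disjoint [Nonempty A] (α : ℕ) {β : ℕ} {x x' : A → ℕ}
    (h : ∀ y, ∑ a, y a = β → ¬Disjoint (AM (x + y)) (AM (x' + y))) :
    ∃ g, IsDAVForm α β g ∧ ∀ y, ∑ a, y a = β → g x y = g x' y := by
  classical
  simp only [Set.not_disjoint_iff] at h
  choose! f hf hf' using h
  choose m hm using AM_nonempty (A := A)
  refine ⟨fun u v => if u = x ∨ u = x' then f v else m (u + v), fun u v _ hv => ?_, by simp⟩
  dsimp only
  split_ifs with hu
  · obtain rfl | rfl := hu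
    exacts [hf v hv, hf' v hv]
  · exact hm (u + v)

theorem forall_isDAVForm_hasDistinctRows_iff [Nonempty A] {α β : ℕ} :
    (∀ g : (A → ℕ) → (A → ℕ) → A, IsDAVForm α β g → HasDistinctRows α β g) ↔
      ∀ x x' : A → ℕ, ∑ a, x a = α → ∑ a, x' a = α → x ≠ x' →
        ∃ y, ∑ a, y a = β ∧ Disjoint (AM (x + y)) (AM (x' + y)) := by
  constructor
  · intro h x x' hx hx' hne
    by_contra! hdisj
    obtain ⟨g, hg, heq⟩ := exists_isDAVForm_forall_eq_of_not_disjoint α hdisj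
    obtain ⟨y, hy, hgy⟩ := h g hg x x' hx hx' hne
    exact hgy (heq y hy)
  · intro h g hg x x' hx hx' hne
    obtain ⟨y, hy, hdisj⟩ := h x x' hx hx' hne
    exact ⟨y, hy, hdisj.ne_of_mem (hg x y hx hy) (hg x' y hx' hy)⟩

end

/-- For `p ≥ 4`: every DAV form has pairwise distinct rows iff `(α,β) ≠ (1,1)`
and `β ≥ 2α - 2`. -/
theorem dav_form_distinct_rows_iff_many_candidates
    {A : Type*} [Fintype A] (α β : ℕ) (hα : 1 ≤ α) (hβ : 1 ≤ β)
    (hp : 4 ≤ Fintype.card A) :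
    (¬(α = 1 ∧ β = 1) ∧ 2 * α - 2 ≤ β) ↔
      ∀ g : (A → ℕ) → (A → ℕ) → A,
        (∀ x y : A → ℕ, (∑ a, x a) = α → (∑ a, y a) = β → g x y ∈ AM (x + y)) →
        ∀ x x' : A → ℕ, (∑ a, x a) = α → (∑ a, x' a) = α → x ≠ x' →
          ∃ y : A → ℕ, (∑ a, y a) = β ∧ g x y ≠ g x' y := by
  classical
  obtain ⟨a, b, c, hab, hac, hbc⟩ := Fintype.two_lt_card_iff.1 (show 2 < Fintype.card A by omega)
  have : Nonempty A := ⟨a⟩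
  refine Iff.trans ?_ forall_isDAVForm_hasDistinctRows_iff.symm
  constructor
  · rintro ⟨hne, hle⟩ x x' hx hx' hxx'
    exact exists_disjoint_AM_of_ne hp hne hle hx hx' hxx'
  · intro h
    obtain ⟨n, rfl⟩ := Nat.exists_eq_add_of_le' hα
    have hrow (d : A) : ∑ i, (Pi.single a n + Pi.single d 1 : A → ℕ) i = n + 1 := by
      simp [Finset.sum_add_distrib]
    have hrows : (Pi.single a n + Pi.single b 1 : A → ℕ) ≠ Pi.single a n + Pi.single c 1 :=
      fun heq => by simpa [hbc] using congrFun (add_left_cancel heq) b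
    obtain ⟨y, rfl, hdisj⟩ := h _ _ (hrow b) (hrow c) hrows
    obtain ⟨hle, hne⟩ := two_mul_le_sum_and_sum_ne_one_of_disjoint_AM hab hac hbc hdisj
    exact ⟨fun h11 => hne h11.2, by omega⟩
end
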